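/- Let r and s be pr-relations whose formulas depend only on disjoint variable sets V and W respectively, let q = r ⊎ s be their integration, and let μ be an assignment that is valid for q (i.e., μ satisfies every event constraint f_t ≡ g_t of q). Then the possible worlds r_μ and s_μ are compatible, and q_μ = r_μ ∪ s_μ. -/

import Mathlib

/-!
On a common tuple, validity of `μ` says that the formulas from `r` and `s` take the same
value at `μ`, so the tuple lies in `r_μ` iff it lies in `s_μ`: this is compatibility.
The integration discards from `s` exactly the pairs of common tuples, so
`q_μ = r_μ ∪ (s_μ \ T(r))`, and by compatibility the removed part of `s_μ` already lies in `r_μ`.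
-/

open scoped Classical

variable {Var Tup : Type*}

/-- A pr-relation is functional: each tuple occurs in at most one tuple–formula pair. -/
def Functional (r : Set (Tup × ((Var → Bool) → Bool))) : Prop :=
  ∀ t (f g : (Var → Bool) → Bool), (t, f) ∈ r → (t, g) ∈ r → f = g

/-- The tuple set `T(r)` of a pr-relation: the set of first components. -/
def tupleSet (r : Set (Tup × ((Var → Bool) → Bool))) : Set Tup :=
  Prod.fst '' r

/-- The possible world `r_μ` of a pr-relation under an assignment `μ`. -/
def world (r : Set (Tup × ((Var → Bool) → Bool))) (μ : Var → Bool) : Set Tup :=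
  { t | ∃ f : (Var → Bool) → Bool, (t, f) ∈ r ∧ f μ = true }

/-- The possible worlds `PW(r)` of a pr-relation. -/
def PW (r : Set (Tup × ((Var → Bool) → Bool))) : Set (Set Tup) :=
  { A | ∃ μ : Var → Bool, A = world r μ }

/-- `A ⊆ T` and `B ⊆ T'` are compatible if `A ∩ (T ∩ T') = B ∩ (T ∩ T')`. -/
def Compatible (T T' A B : Set Tup) : Prop :=
  A ∩ (T ∩ T') = B ∩ (T ∩ T')

/-- A formula depends only on the variables in `V`. -/
def DependsOnly (f : (Var → Bool) → Bool) (V : Set Var) : Prop :=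
  ∀ μ μ' : Var → Bool, (∀ v ∈ V, μ v = μ' v) → f μ = f μ'

/-- The tuple–formula pairs of the integration `q = r ⊎ s`: pairs of `r`, together with
the pairs of `s` whose tuple is not a tuple of `r` (for common tuples the formula is
taken from `r`). -/
def integ (r s : Set (Tup × ((Var → Bool) → Bool))) :
    Set (Tup × ((Var → Bool) → Bool)) :=
  r ∪ { p | p ∈ s ∧ p.1 ∉ tupleSet r }

/-- The event constraints of the integration `q = r ⊎ s`: the pairs `(f_t, g_t)` for
each common tuple `t`, where `f_t` and `g_t` are the formulas of `t` in `r` and `s`. -/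
def integConstraints (r s : Set (Tup × ((Var → Bool) → Bool))) :
    Set (((Var → Bool) → Bool) × ((Var → Bool) → Bool)) :=
  { fg | ∃ t : Tup, (t, fg.1) ∈ r ∧ (t, fg.2) ∈ s }

/-- An assignment is valid for the integration `r ⊎ s` if it satisfies every event
constraint `f_t ≡ g_t` coming from a common tuple `t`. -/
def ValidInteg (r s : Set (Tup × ((Var → Bool) → Bool))) (μ : Var → Bool) : Prop :=
  ∀ t (f g : (Var → Bool) → Bool), (t, f) ∈ r → (t, g) ∈ s → f μ = g μ

/-- The possible worlds of the integration `r ⊎ s` (over valid assignments). -/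
def PWinteg (r s : Set (Tup × ((Var → Bool) → Bool))) : Set (Set Tup) :=
  { A | ∃ μ : Var → Bool, ValidInteg r s μ ∧ A = world (integ r s) μ }

/-- An assignment is valid for a set of event constraints. -/
def ValidEpr (C : Set (((Var → Bool) → Bool) × ((Var → Bool) → Bool)))
    (μ : Var → Bool) : Prop :=
  ∀ f g : (Var → Bool) → Bool, (f, g) ∈ C → f μ = g μ

/-- The possible worlds of an epr-relation `q` with event constraints `C`. -/
def PWepr (q : Set (Tup × ((Var → Bool) → Bool)))
    (C : Set (((Var → Bool) → Bool) × ((Var → Bool) → Bool))) : Set (Set Tup) :=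
  { A | ∃ μ : Var → Bool, ValidEpr C μ ∧ A = world q μ }

/-- The event-variable formula `φ^r_A` of a relation `A ⊆ T(r)`:
`φ^r_A μ = true` iff `f μ = true` for every `(t, f) ∈ r` with `t ∈ A` and
`f μ = false` for every `(t, f) ∈ r` with `t ∉ A`. -/
noncomputable def evf (r : Set (Tup × ((Var → Bool) → Bool))) (A : Set Tup) :
    (Var → Bool) → Bool :=
  fun μ => decide (∀ (t : Tup) (f : (Var → Bool) → Bool), (t, f) ∈ r → (f μ = true ↔ t ∈ A))

/-- The event-variable formula `Ξ^q_A` of `A ⊆ T(q)` for an epr-relation `q` with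
event constraints `C` (conjoining all event constraints). -/
noncomputable def eevf (q : Set (Tup × ((Var → Bool) → Bool)))
    (C : Set (((Var → Bool) → Bool) × ((Var → Bool) → Bool))) (A : Set Tup) :
    (Var → Bool) → Bool :=
  fun μ => decide (ValidEpr C μ ∧
    ∀ (t : Tup) (h : (Var → Bool) → Bool), (t, h) ∈ q → (h μ = true ↔ t ∈ A))

section

variable {r s : Set (Tup × ((Var → Bool) → Bool))} {μ : Var → Bool}

theorem Compatible.union_sdiff_eq_union {T T' A B : Set Tup} (h : Compatible T T' A B)
    (hB : B ⊆ T') : A ∪ B \ T = A ∪ B := by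
  have hBT : B ∩ T ⊆ A := fun _ ⟨htB, htT⟩ =>
    (h.symm.subset ⟨htB, htT, hB htB⟩).1
  calc
    A ∪ B \ T = A ∪ B ∩ T ∪ B \ T := by rw [Set.union_eq_left.mpr hBT]
    _ = A ∪ B := by rw [Set.union_assoc, Set.inter_union_sdiff]

theorem world_subset_tupleSet : world r μ ⊆ tupleSet r :=
  fun _ ⟨_, hf, _⟩ => Set.mem_image_of_mem Prod.fst hf

theorem world_union : world (r ∪ s) μ = world r μ ∪ world s μ := by
  ext t
  simp only [world, Set.mem_ofPred_eq, Set.mem_union, or_and_right, exists_or]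

theorem world_sep_notMem (T : Set Tup) : world {p ∈ r | p.1 ∉ T} μ = world r μ \ T := by
  ext t
  simp only [world, Set.mem_ofPred_eq, Set.mem_sdiff, and_right_comm, exists_and_right]

theorem world_integ : world (integ r s) μ = world r μ ∪ world s μ \ tupleSet r := by
  rw [integ, world_union, world_sep_notMem]

theorem ValidInteg.symm (h : ValidInteg r s μ) : ValidInteg s r μ :=
  fun t g f hg hf => (h t f g hf hg).symm

theorem ValidInteg.world_inter_tupleSet_subset (h : ValidInteg r s μ) :
    world r μ ∩ tupleSet s ⊆ world s μ := by
  rintro _ ⟨⟨f, hf, hfμ⟩, ⟨t, g⟩, hg, rfl⟩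
  exact ⟨g, hg, (h t f g hf hg).symm.trans hfμ⟩

theorem ValidInteg.compatible_world (h : ValidInteg r s μ) :
    Compatible (tupleSet r) (tupleSet s) (world r μ) (world s μ) :=
  Set.Subset.antisymm
    (fun _ ⟨htr, hT⟩ => ⟨h.world_inter_tupleSet_subset ⟨htr, hT.2⟩, hT⟩)
    (fun _ ⟨hts, hT⟩ => ⟨h.symm.world_inter_tupleSet_subset ⟨hts, hT.1⟩, hT⟩)

theorem world_integ_of_valid_general (h : ValidInteg r s μ) :
    Compatible (tupleSet r) (tupleSet s) (world r μ) (world s μ) ∧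
      world (integ r s) μ = world r μ ∪ world s μ :=
  ⟨h.compatible_world,
    world_integ.trans (h.compatible_world.union_sdiff_eq_union world_subset_tupleSet)⟩

end

/-- For an assignment `μ` valid for the integration `q = r ⊎ s`, the possible worlds
`r_μ` and `s_μ` are compatible, and `q_μ = r_μ ∪ s_μ`. -/
theorem world_integ_of_valid
    (r s : Set (Tup × ((Var → Bool) → Bool))) (V W : Set Var)
    (hrFin : r.Finite) (hsFin : s.Finite)
    (hrFun : Functional r) (hsFun : Functional s)
    (hVW : V ∩ W = ∅)
    (hrV : ∀ (t : Tup) (f : (Var → Bool) → Bool), (t, f) ∈ r → DependsOnly f V)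
    (hsW : ∀ (t : Tup) (g : (Var → Bool) → Bool), (t, g) ∈ s → DependsOnly g W)
    (μ : Var → Bool) (hμ : ValidInteg r s μ) :
    Compatible (tupleSet r) (tupleSet s) (world r μ) (world s μ) ∧
    world (integ r s) μ = world r μ ∪ world s μ := by
  exact world_integ_of_valid_general hμ
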